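/- Refined Lee-et-al. bound via Dvoretzky–Kiefer–Wolfowitz: Let ℓ : H × Z → [0,1] be a measurable loss, μ : H × Z^m → ℝ a measurable parametric function, and S ↦ Q_S any posterior Markov kernel. Fix n ≥ 1 and draw (S₁,h₁),…,(Sₙ,hₙ) i.i.d. from D^m ⊗ Q (so Sᵢ ∼ D^m and hᵢ ∼ Q_{Sᵢ}). For any δ ∈ (0,1], with probability at least 1−δ over these n pairs, for every ε > 0: P_{S∼D^m, h∼Q_S}[ |R_D^ℓ(h) − R_S^ℓ(h)| ≤ μ(h,S) + ε ] ≥ 1 − (1/n)·Σ_{i=1}^n 1[ |R_D^ℓ(hᵢ) − R_{Sᵢ}^ℓ(hᵢ)| − μ(hᵢ,Sᵢ) > ε ] − √(ln(2/δ)/(2n)). -/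

import Mathlib

open MeasureTheory ProbabilityTheory

/-- The true risk `R_D^ℓ(h) = E_{z∼D} ℓ(h,z)`. -/
noncomputable def trueRisk {H Z : Type*} [MeasurableSpace Z]
    (D : Measure Z) (ℓ : H → Z → ℝ) (h : H) : ℝ :=
  ∫ z, ℓ h z ∂D

/-- The empirical risk `R_S^ℓ(h) = (1/m) Σ_{i=1}^m ℓ(h,z_i)`. -/
noncomputable def empRisk {H Z : Type*} {m : ℕ}
    (ℓ : H → Z → ℝ) (h : H) (S : Fin m → Z) : ℝ :=
  (∑ i, ℓ h (S i)) / m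

/-! The bound is the one-sided Dvoretzky–Kiefer–Wolfowitz inequality, with Massart's constant, for
the law of the excess gap `|R_D(h) - R_S(h)| - μ(h, S)`, and the latter follows by a change of
measure. Given `t`, multiply the probability of the tail `(s, ∞)` by a factor depending on `t`
only, and rescale the rest to total mass one. The tilted laws for different thresholds `s` agree
on their common tail. Scan the thresholds downwards up to the first `s` whose empirical tail mass
falls short by more than `t`: this event only involves the sample above `s`, so all tilted laws
with a lower threshold give it the same probability, and on it the likelihood ratio of the sample
is at least `exp (2 n t ^ 2)`. These events being disjoint, their total probability under the
original law is at most `exp (-2 n t ^ 2)` times that under a single tilted law. -/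

open Real Set
open scoped ENNReal

theorem nonneg_of_hasDerivAt_nonneg {f f' : ℝ → ℝ} {a b : ℝ} (hfa : 0 ≤ f a)
    (hf : ∀ x ∈ Icc a b, HasDerivAt f (f' x) x) (hf' : ∀ x ∈ Icc a b, 0 ≤ f' x) :
    ∀ x ∈ Icc a b, 0 ≤ f x := by
  intro x hx
  have hmono : MonotoneOn f (Icc a b) :=
    monotoneOn_of_hasDerivWithinAt_nonneg (convex_Icc a b)
      (fun y hy ↦ (hf y hy).continuousAt.continuousWithinAt)
      (fun y hy ↦ (hf y (interior_subset hy)).hasDerivWithinAt)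
      (fun y hy ↦ hf' y (interior_subset hy))
  exact hfa.trans (hmono (left_mem_Icc.2 (hx.1.trans hx.2)) hx hx.1)

section RateGap

variable {t u : ℝ}

/-- The factor by which the tail above a threshold is scaled when testing for a deviation of
size `t`. Its expansion begins `1 - 2 t + 4 t ^ 2 / 3`, and both coefficients are forced by
`rateGap u t ≥ 0` for every `u`: with `-2` the gap vanishes to second order at `t = 0`, and `4 / 3`
is the only value for which its third-order term is nonnegative for all `u`. The cube is a closed
form with this expansion which stays positive for `t < 1`. -/
noncomputable def tiltFactor (t : ℝ) : ℝ := (1 - 2 * t / 3) ^ 3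

/-- The density that restores total mass one off a set of probability `u` on which the density
is `a`; junk for `u = 1`. -/
noncomputable def complFactor (a u : ℝ) : ℝ := (1 - a * u) / (1 - u)

/-- The log-likelihood ratio per observation of the tilted law against the original one, at a
sample whose tail frequency `u - t` falls short of the tail probability `u` by `t`, minus the
rate `2 t ^ 2` to be attained. -/
noncomputable def rateGap (u t : ℝ) : ℝ :=
  (u - t) * log (tiltFactor t) + (1 - u + t) * log (complFactor (tiltFactor t) u) - 2 * t ^ 2

/-- The derivative of `rateGap u` at `t`, with the derivatives of the two logarithms combined
into a single fraction. -/
noncomputable def rateGapDeriv (u t : ℝ) : ℝ :=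
  log (complFactor (tiltFactor t) u) - log (tiltFactor t)
    - 2 * (u - t - tiltFactor t * u) / ((1 - 2 * t / 3) * (1 - tiltFactor t * u)) - 4 * t

/-- The numerator of the second derivative of `rateGap u` at `t`, up to the factor `4 t / 9`, in
terms of `r = 1 - 2 t / 3`. -/
def curvaturePoly (r u : ℝ) : ℝ :=
  (3 + 6 * r) - (12 * r ^ 4 + 18 * r ^ 3 + 2 * r ^ 2 + 2 * r + 2) * u
    + 2 * r ^ 3 * (3 * r ^ 4 + 3 * r ^ 3 + 4 * r ^ 2 + 4 * r + 4) * u ^ 2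

theorem curvaturePoly_nonneg_of_le {r : ℝ} (hr : r ∈ Icc 0 (7 / 15)) (hu : u ≤ 1) :
    0 ≤ curvaturePoly r u := by
  obtain ⟨hr0, hr1⟩ := hr
  have hb : 0 ≤ 12 * r ^ 4 + 18 * r ^ 3 + 2 * r ^ 2 + 2 * r + 2 := by positivity
  have hcb : 12 * r ^ 4 + 18 * r ^ 3 + 2 * r ^ 2 + 2 * r + 2 ≤ 3 + 6 * r := by
    have h2 : r ^ 2 ≤ 7 / 15 * r := by nlinarith
    have h3 : r ^ 3 ≤ (7 / 15) ^ 2 * r := by nlinarith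
    have h4 : r ^ 4 ≤ (7 / 15) ^ 3 * r := by nlinarith
    linarith
  have hquad : 0 ≤ 2 * r ^ 3 * (3 * r ^ 4 + 3 * r ^ 3 + 4 * r ^ 2 + 4 * r + 4) * u ^ 2 := by
    positivity
  unfold curvaturePoly
  linarith [mul_le_of_le_one_right hb hu]

theorem curvaturePoly_nonneg_of_ge {r : ℝ} (hr : r ∈ Icc (7 / 15) 1) (u : ℝ) :
    0 ≤ curvaturePoly r u := by
  obtain ⟨hr0, hr1⟩ := hr
  have hr_pos : 0 < r := by linarith
  have hdiscr : 0 ≤ 4 * (1 - r) *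
      (54 * r ^ 6 + 81 * r ^ 5 + 39 * r ^ 4 - 2 * r ^ 3 - 6 * r ^ 2 - 3 * r - 1) := by
    have h3 : 7 / 15 * r ^ 3 ≤ r ^ 4 := by
      rw [pow_succ r 3, mul_comm]; gcongr
    have h2 : 7 / 15 * r ^ 2 ≤ r ^ 3 := by
      rw [pow_succ r 2, mul_comm]; gcongr
    have h5 : 7 / 15 * r ^ 4 ≤ r ^ 5 := by
      rw [pow_succ r 4, mul_comm]; gcongr
    have h6 : 7 / 15 * r ^ 5 ≤ r ^ 6 := by
      rw [pow_succ r 5, mul_comm]; gcongr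
    have h1 : 7 / 15 * r ≤ r ^ 2 := by nlinarith
    exact mul_nonneg (by linarith) (by linarith)
  have hsq : 4 * (3 + 6 * r) * curvaturePoly r u =
      (2 * (3 + 6 * r) - (12 * r ^ 4 + 18 * r ^ 3 + 2 * r ^ 2 + 2 * r + 2) * u) ^ 2
        + 4 * (1 - r) *
          (54 * r ^ 6 + 81 * r ^ 5 + 39 * r ^ 4 - 2 * r ^ 3 - 6 * r ^ 2 - 3 * r - 1) * u ^ 2 := by
    unfold curvaturePoly; ring
  refine nonneg_of_mul_nonneg_right (a := 4 * (3 + 6 * r)) ?_ (by positivity)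
  rw [hsq]
  exact add_nonneg (sq_nonneg _) (mul_nonneg hdiscr (sq_nonneg u))

theorem curvaturePoly_nonneg {r : ℝ} (hr : r ∈ Icc 0 1) (hu : u ≤ 1) :
    0 ≤ curvaturePoly r u := by
  rcases le_total r (7 / 15) with h | h
  · exact curvaturePoly_nonneg_of_le ⟨hr.1, h⟩ hu
  · exact curvaturePoly_nonneg_of_ge ⟨h, hr.2⟩ u

theorem tiltFactor_pos (ht : t < 1) : 0 < tiltFactor t :=
  pow_pos (by linarith) 3

theorem tiltFactor_le_one (ht0 : 0 ≤ t) (ht1 : t < 1) : tiltFactor t ≤ 1 :=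
  pow_le_one₀ (by linarith) (by linarith)

theorem one_sub_mul_pos {a : ℝ} (ha : a ≤ 1) (hu0 : 0 ≤ u) (hu1 : u < 1) : 0 < 1 - a * u := by
  nlinarith

theorem one_le_complFactor {a : ℝ} (ha : a ≤ 1) (hu0 : 0 ≤ u) (hu1 : u < 1) :
    1 ≤ complFactor a u := by
  rw [complFactor, le_div_iff₀ (sub_pos.2 hu1)]
  nlinarith

theorem hasDerivAt_tiltFactor (t : ℝ) :
    HasDerivAt tiltFactor (-2 * (1 - 2 * t / 3) ^ 2) t := by
  have h := ((((hasDerivAt_id t).const_mul 2).div_const 3).const_sub 1).pow 3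
  refine h.congr_deriv ?_
  simp only [id]
  ring

theorem hasDerivAt_log_tiltFactor (ht : t < 1) :
    HasDerivAt (fun s ↦ log (tiltFactor s)) (-2 / (1 - 2 * t / 3)) t := by
  have : 1 - 2 * t / 3 ≠ 0 := by linarith
  refine ((hasDerivAt_tiltFactor t).log (tiltFactor_pos ht).ne').congr_deriv ?_
  unfold tiltFactor
  field_simp

theorem hasDerivAt_log_complFactor (hu0 : 0 ≤ u) (hu1 : u < 1) (ht0 : 0 ≤ t) (ht1 : t < 1) :
    HasDerivAt (fun s ↦ log (complFactor (tiltFactor s) u))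
      (2 * (1 - 2 * t / 3) ^ 2 * u / (1 - tiltFactor t * u)) t := by
  have hq := one_sub_mul_pos (tiltFactor_le_one ht0 ht1) hu0 hu1
  have hu : 1 - u ≠ 0 := by linarith
  have h := (((hasDerivAt_tiltFactor t).mul_const u).const_sub 1).div_const (1 - u)
  refine (h.log (div_ne_zero hq.ne' hu)).congr_deriv ?_
  field_simp

theorem hasDerivAt_rateGap (hu0 : 0 ≤ u) (hu1 : u < 1) (ht0 : 0 ≤ t) (ht1 : t < 1) :
    HasDerivAt (rateGap u) (rateGapDeriv u t) t := by
  have hr : 1 - 2 * t / 3 ≠ 0 := by linarith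
  have hq := (one_sub_mul_pos (tiltFactor_le_one ht0 ht1) hu0 hu1).ne'
  have h := ((((hasDerivAt_id t).const_sub u).mul (hasDerivAt_log_tiltFactor ht1)).add
    (((hasDerivAt_id t).const_add (1 - u)).mul
      (hasDerivAt_log_complFactor hu0 hu1 ht0 ht1))).sub (((hasDerivAt_id t).pow 2).const_mul 2)
  refine h.congr_deriv ?_
  simp only [id, rateGapDeriv]
  generalize log (complFactor (tiltFactor t) u) = L
  generalize log (tiltFactor t) = M
  have hα : tiltFactor t = (1 - 2 * t / 3) ^ 3 := rfl
  rw [hα] at hq ⊢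
  generalize 1 - 2 * t / 3 = r at hr hq ⊢
  generalize hB : 1 - r ^ 3 * u = B at hq ⊢
  field_simp
  subst hB
  ring

theorem hasDerivAt_rateGapDeriv (hu0 : 0 ≤ u) (hu1 : u < 1) (ht0 : 0 ≤ t) (ht1 : t < 1) :
    HasDerivAt (rateGapDeriv u)
      (4 * t / 9 * curvaturePoly (1 - 2 * t / 3) u
        / ((1 - 2 * t / 3) * (1 - tiltFactor t * u)) ^ 2) t := by
  have hr : 1 - 2 * t / 3 ≠ 0 := by linarith
  have hq := (one_sub_mul_pos (tiltFactor_le_one ht0 ht1) hu0 hu1).ne'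
  have hr' := (((hasDerivAt_id t).const_mul 2).div_const 3).const_sub 1
  have hα' := (hasDerivAt_tiltFactor t).mul_const u
  have h := (((hasDerivAt_log_complFactor hu0 hu1 ht0 ht1).sub (hasDerivAt_log_tiltFactor ht1)).sub
    (((((hasDerivAt_id t).const_sub u).sub hα').const_mul 2).div
      (hr'.mul (hα'.const_sub 1)) (mul_ne_zero hr hq))).sub ((hasDerivAt_id t).const_mul 4)
  refine h.congr_deriv ?_
  simp only [id, Pi.mul_apply, Pi.sub_apply]
  have hα : tiltFactor t = (1 - 2 * t / 3) ^ 3 := rfl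
  rw [hα] at hq ⊢
  obtain ⟨r, rfl⟩ : ∃ r, t = 3 * (1 - r) / 2 := ⟨1 - 2 * t / 3, by ring⟩
  have hrr : 1 - 2 * (3 * (1 - r) / 2) / 3 = r := by ring
  rw [hrr] at hr hq ⊢
  unfold curvaturePoly
  generalize hB : 1 - r ^ 3 * u = B at hq ⊢
  field_simp
  subst hB
  ring

theorem rateGap_nonneg (ht : t ∈ Icc 0 u) (hu : u < 1) : 0 ≤ rateGap u t := by
  have hu0 : 0 ≤ u := ht.1.trans ht.2
  have hlt : ∀ s ∈ Icc 0 u, s < 1 := fun s hs ↦ hs.2.trans_lt hu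
  have htilt : tiltFactor 0 = 1 := by norm_num [tiltFactor]
  have hcompl : complFactor 1 u = 1 := by
    rw [complFactor, one_mul, div_self (sub_pos.2 hu).ne']
  have hderiv : ∀ s ∈ Icc 0 u, 0 ≤ rateGapDeriv u s := by
    refine nonneg_of_hasDerivAt_nonneg (by simp [rateGapDeriv, htilt, hcompl])
      (fun s hs ↦ hasDerivAt_rateGapDeriv hu0 hu hs.1 (hlt s hs)) fun s hs ↦ ?_
    have hs0 : 0 ≤ s := hs.1
    have hcurv : 0 ≤ curvaturePoly (1 - 2 * s / 3) u :=
      curvaturePoly_nonneg ⟨by linarith [hlt s hs], by linarith⟩ hu.le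
    positivity
  exact nonneg_of_hasDerivAt_nonneg (by simp [rateGap, htilt, hcompl])
    (fun s hs ↦ hasDerivAt_rateGap hu0 hu hs.1 (hlt s hs)) hderiv t ht

theorem exp_le_tiltFactor_pow_mul_complFactor_pow {n N : ℕ} (hN : N ≤ n)
    (ht : t ∈ Icc 0 u) (hu : u < 1) (hNt : N ≤ n * (u - t)) :
    exp (2 * n * t ^ 2) ≤ tiltFactor t ^ N * complFactor (tiltFactor t) u ^ (n - N) := by
  have ht1 : t < 1 := ht.2.trans_lt hu
  have hα := tiltFactor_pos ht1
  have hα1 := tiltFactor_le_one ht.1 ht1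
  have hβ1 := one_le_complFactor hα1 (ht.1.trans ht.2) hu
  have := one_pos.trans_le hβ1
  have hlog : log (tiltFactor t) ≤ log (complFactor (tiltFactor t) u) :=
    log_le_log hα (hα1.trans hβ1)
  have hgap : 0 ≤ n * rateGap u t := mul_nonneg n.cast_nonneg (rateGap_nonneg ht hu)
  have hshift := mul_le_mul_of_nonneg_right hNt (sub_nonneg.2 hlog)
  rw [← le_log_iff_exp_le (by positivity), log_mul (by positivity) (by positivity), log_pow,
    log_pow, Nat.cast_sub hN]
  unfold rateGap at hgap
  linarith

end RateGap

section ProductMeasure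

variable {ι : Type*} [Fintype ι] {E : ι → Type*} [∀ i, MeasurableSpace (E i)]

theorem lintegral_pi_prod_eq_prod_lintegral (ρ : ∀ i, Measure (E i))
    [∀ i, IsProbabilityMeasure (ρ i)] {f : ∀ i, E i → ℝ≥0∞} (hf : ∀ i, Measurable (f i)) :
    ∫⁻ ω, ∏ i, f i (ω i) ∂Measure.pi ρ = ∏ i, ∫⁻ x, f i x ∂ρ i := by
  refine (lintegral_prod_eq_prod_lintegral_of_indepFun Finset.univ
    (fun i (ω : ∀ i, E i) ↦ f i (ω i)) (iIndepFun_pi fun i ↦ (hf i).aemeasurable)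
    fun i ↦ (hf i).comp (measurable_pi_apply i)).trans ?_
  exact Finset.prod_congr rfl fun i _ ↦ (measurePreserving_eval ρ i).lintegral_comp (hf i)

theorem pi_withDensity (ρ : ∀ i, Measure (E i)) [∀ i, IsProbabilityMeasure (ρ i)]
    {f : ∀ i, E i → ℝ≥0∞} (hf : ∀ i, Measurable (f i))
    [∀ i, SigmaFinite ((ρ i).withDensity (f i))] :
    Measure.pi (fun i ↦ (ρ i).withDensity (f i)) =
      (Measure.pi ρ).withDensity fun ω ↦ ∏ i, f i (ω i) := by
  classical
  refine Measure.pi_eq fun B hB ↦ ?_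
  have hbox : (univ.pi B).indicator (fun ω ↦ ∏ i, f i (ω i)) =
      fun ω ↦ ∏ i, (B i).indicator (f i) (ω i) := by
    ext ω
    by_cases hω : ω ∈ univ.pi B
    · rw [indicator_of_mem hω]
      exact Finset.prod_congr rfl fun i _ ↦ (indicator_of_mem (hω i trivial) _).symm
    · obtain ⟨i, -, hi⟩ : ∃ i, i ∈ univ ∧ ω i ∉ B i := by simpa [Set.mem_pi] using hω
      rw [indicator_of_notMem hω,
        Finset.prod_eq_zero (Finset.mem_univ i) (indicator_of_notMem hi _)]
  rw [withDensity_apply _ (.univ_pi hB), ← lintegral_indicator (.univ_pi hB), hbox,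
    lintegral_pi_prod_eq_prod_lintegral ρ fun i ↦ (hf i).indicator (hB i)]
  exact Finset.prod_congr rfl fun i _ ↦ by
    rw [lintegral_indicator (hB i), withDensity_apply _ (hB i)]

theorem pi_apply_eq_of_map_eq {μ ν : ∀ i, Measure (E i)} [∀ i, IsProbabilityMeasure (μ i)]
    [∀ i, IsProbabilityMeasure (ν i)] {f : ∀ i, E i → E i} (hf : ∀ i, Measurable (f i))
    (hmap : ∀ i, (μ i).map (f i) = (ν i).map (f i)) {A : Set (∀ i, E i)} (hA : MeasurableSet A)
    (hAf : (fun ω i ↦ f i (ω i)) ⁻¹' A = A) : Measure.pi μ A = Measure.pi ν A := by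
  have (i : ι) := Measure.isProbabilityMeasure_map (μ := μ i) (hf i).aemeasurable
  have (i : ι) := Measure.isProbabilityMeasure_map (μ := ν i) (hf i).aemeasurable
  have hfpi : Measurable fun (ω : ∀ i, E i) i ↦ f i (ω i) := by fun_prop
  rw [← hAf, ← Measure.map_apply hfpi hA, ← Measure.map_apply hfpi hA,
    Measure.pi_map_pi fun i ↦ (hf i).aemeasurable, Measure.pi_map_pi fun i ↦ (hf i).aemeasurable]
  simp only [hmap]

end ProductMeasure

section Measure

variable {E : Type*} [MeasurableSpace E]

theorem map_eq_of_restrict_eq_of_eqOn_compl {E' : Type*} [MeasurableSpace E'] {μ ν : Measure E}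
    [IsProbabilityMeasure μ] [IsProbabilityMeasure ν] {C : Set E} (hC : MeasurableSet C)
    (hμν : μ.restrict C = ν.restrict C) {f : E → E'} (hf : Measurable f) {c : E'}
    (hfc : ∀ x ∈ Cᶜ, f x = c) : μ.map f = ν.map f := by
  have hcompl (η : Measure E) : (η.restrict Cᶜ).map f = η Cᶜ • Measure.dirac c := by
    rw [Measure.map_congr (ae_restrict_of_forall_mem hC.compl hfc), Measure.map_const,
      Measure.restrict_apply_univ]
  have hmass : μ Cᶜ = ν Cᶜ := by
    rw [prob_compl_eq_one_sub hC, prob_compl_eq_one_sub hC, ← Measure.restrict_apply_self μ,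
      ← Measure.restrict_apply_self ν, hμν]
  rw [← Measure.restrict_add_restrict_compl (μ := μ) hC,
    ← Measure.restrict_add_restrict_compl (μ := ν) hC, Measure.map_add _ _ hf,
    Measure.map_add _ _ hf, hμν, hcompl, hcompl, hmass]

theorem measure_biUnion_le_of_finset_le {κ : Type*} {μ : Measure E} {G : κ → Set E} {T : Set κ}
    (hT : T.Countable) {c : ℝ≥0∞}
    (hG : ∀ F : Finset κ, (F : Set κ) ⊆ T → μ (⋃ k ∈ F, G k) ≤ c) : μ (⋃ k ∈ T, G k) ≤ c := by
  classical
  have := hT.to_subtype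
  have hunion : ⋃ k ∈ T, G k = ⋃ F : Finset T, ⋃ k ∈ F, G k := by
    rw [biUnion_eq_iUnion, iUnion_eq_iUnion_finset]
  have hmono : Monotone fun F : Finset T ↦ ⋃ k ∈ F, G k :=
    fun _ _ hFF' ↦ biUnion_subset_biUnion_left hFF'
  rw [hunion, hmono.directed_le.measure_iUnion]
  refine iSup_le fun F ↦ ?_
  simpa using hG (F.image Subtype.val) (by simp)

end Measure

section TailTilt

variable {ρ : Measure ℝ} {a s : ℝ}

/-- The law whose density with respect to `ρ` is `a` on the tail `(s, ∞)` and the constant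
`complFactor a (ρ.real (Ioi s))` on `(-∞, s]` that restores total mass one. As the tail density
does not depend on `s`, the tilts at two thresholds agree above the larger one. -/
noncomputable def tailTilt (ρ : Measure ℝ) (a s : ℝ) : Measure ℝ :=
  ρ.withDensity fun x ↦
    ENNReal.ofReal (if s < x then a else complFactor a (ρ.real (Ioi s)))

theorem measurable_tailTilt_density (b : ℝ) :
    Measurable fun x ↦ ENNReal.ofReal (if s < x then a else b) :=
  (Measurable.ite measurableSet_Ioi measurable_const measurable_const).ennreal_ofReal

theorem restrict_tailTilt_Ioi {r : ℝ} (hsr : s ≤ r) :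
    (tailTilt ρ a s).restrict (Ioi r) = ENNReal.ofReal a • ρ.restrict (Ioi r) := by
  rw [tailTilt, restrict_withDensity measurableSet_Ioi, ← withDensity_const]
  refine withDensity_congr_ae (ae_restrict_of_forall_mem measurableSet_Ioi fun x hx ↦ ?_)
  simp only [if_pos (hsr.trans_lt hx)]

theorem isProbabilityMeasure_tailTilt [IsProbabilityMeasure ρ] (ha0 : 0 ≤ a) (ha1 : a ≤ 1)
    (hs : ρ.real (Ioi s) < 1) : IsProbabilityMeasure (tailTilt ρ a s) := by
  set u := ρ.real (Ioi s)
  set c := complFactor a u with hc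
  have hIic : ρ.real (Ioi s)ᶜ = 1 - u := probReal_compl_eq_one_sub measurableSet_Ioi
  have hc0 : 0 ≤ c := zero_le_one.trans (one_le_complFactor ha1 measureReal_nonneg hs)
  have htotal : a * u + c * (1 - u) = 1 := by
    rw [hc, complFactor, div_mul_cancel₀ _ (sub_pos.2 hs).ne']
    ring
  refine ⟨?_⟩
  calc tailTilt ρ a s univ
      = ∫⁻ x, ENNReal.ofReal (if s < x then a else c) ∂ρ := by
        rw [tailTilt, withDensity_apply _ .univ, Measure.restrict_univ]
    _ = ∫⁻ _ in Ioi s, ENNReal.ofReal a ∂ρ + ∫⁻ _ in (Ioi s)ᶜ, ENNReal.ofReal c ∂ρ := by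
        rw [← lintegral_add_compl _ (measurableSet_Ioi (a := s))]
        congr 1
        · exact setLIntegral_congr_fun measurableSet_Ioi fun x hx ↦ by
            simp only [if_pos (mem_Ioi.1 hx)]
        · exact setLIntegral_congr_fun measurableSet_Ioi.compl fun x hx ↦ by
            simp only [if_neg (show ¬s < x from hx)]
    _ = ENNReal.ofReal (a * u + c * (1 - u)) := by
        rw [setLIntegral_const, setLIntegral_const, ← ofReal_measureReal, ← ofReal_measureReal,
          hIic, ENNReal.ofReal_add (mul_nonneg ha0 measureReal_nonneg)
          (mul_nonneg hc0 (sub_nonneg.2 hs.le)), ENNReal.ofReal_mul ha0, ENNReal.ofReal_mul hc0]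
    _ = 1 := by rw [htotal, ENNReal.ofReal_one]

end TailTilt

section DvoretzkyKieferWolfowitz

variable {ι : Type*} [Fintype ι] {ρ : Measure ℝ} {t s : ℝ} {ω : ι → ℝ}

/-- The number of coordinates of the sample `ω` in the tail `(s, ∞)`. -/
noncomputable def tailCount (s : ℝ) (ω : ι → ℝ) : ℕ :=
  (Finset.univ.filter fun i ↦ s < ω i).card

/-- The event that the empirical mass of `(s, ∞)` falls short of its `ρ`-mass by more than `t`.
Multiplying through by the sample size avoids a division by zero on the empty sample, and makes
the event empty there. -/
def deviationSet (ρ : Measure ℝ) (t s : ℝ) : Set (ι → ℝ) :=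
  {ω | tailCount s ω < Fintype.card ι * (ρ.real (Ioi s) - t)}

/-- The event that, scanning the thresholds in `F` downwards, `s` is the first one at which the
sample deviates. -/
def firstDeviationSet (ρ : Measure ℝ) (t : ℝ) (F : Finset ℝ) (s : ℝ) : Set (ι → ℝ) :=
  deviationSet ρ t s \ ⋃ r ∈ F.filter (s < ·), deviationSet ρ t r

theorem tailCount_le_card : tailCount s ω ≤ Fintype.card ι :=
  Finset.card_le_univ _

theorem tailCount_antitone : Antitone fun s ↦ tailCount s ω :=
  fun _ _ hsr ↦ Finset.card_le_card (Finset.monotone_filter_right _ fun _ _ hi ↦ hsr.trans_lt hi)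

theorem tailCount_eq_sum : (tailCount s ω : ℝ) = ∑ i, if s < ω i then 1 else 0 := by
  rw [tailCount, Finset.sum_boole]

theorem measurable_tailCount (s : ℝ) : Measurable fun ω : ι → ℝ ↦ (tailCount s ω : ℝ) := by
  simp only [tailCount_eq_sum]
  exact Finset.measurable_sum _ fun i _ ↦
    .ite (measurable_pi_apply i measurableSet_Ioi) measurable_const measurable_const

theorem prod_ite_lt_eq_pow_mul_pow {M : Type*} [CommMonoid M] (a b : M) :
    ∏ i, (if s < ω i then a else b) =
      a ^ tailCount s ω * b ^ (Fintype.card ι - tailCount s ω) := by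
  classical
  rw [Finset.prod_ite, Finset.prod_const, Finset.prod_const, Finset.filter_not,
    ← Finset.compl_eq_univ_sdiff, Finset.card_compl, tailCount]

theorem tailCount_max_of_le {r : ℝ} (hsr : s ≤ r) :
    tailCount r (fun i ↦ max (ω i) s) = tailCount r ω := by
  simp only [tailCount, lt_max_iff, hsr.not_gt, or_false]

theorem measurableSet_deviationSet : MeasurableSet (deviationSet ρ t s : Set (ι → ℝ)) :=
  measurableSet_lt (measurable_tailCount s) measurable_const

theorem measurableSet_firstDeviationSet (F : Finset ℝ) :
    MeasurableSet (firstDeviationSet ρ t F s : Set (ι → ℝ)) :=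
  measurableSet_deviationSet.diff
    (Finset.measurableSet_biUnion _ fun _ _ ↦ measurableSet_deviationSet)

theorem lt_real_Ioi_of_mem_deviationSet (hω : ω ∈ deviationSet ρ t s) : t < ρ.real (Ioi s) :=
  sub_pos.1 (pos_of_mul_pos_right ((Nat.cast_nonneg _).trans_lt hω) (Nat.cast_nonneg _))

theorem preimage_max_firstDeviationSet (F : Finset ℝ) :
    (fun (ω : ι → ℝ) i ↦ max (ω i) s) ⁻¹' firstDeviationSet ρ t F s =
      firstDeviationSet ρ t F s := by
  have hdev {r : ℝ} (hsr : s ≤ r) : (fun (ω : ι → ℝ) i ↦ max (ω i) s) ⁻¹' deviationSet ρ t r =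
      deviationSet ρ t r := by
    ext ω
    simp only [deviationSet, mem_preimage, mem_ofPred_eq, tailCount_max_of_le hsr]
  rw [firstDeviationSet, preimage_sdiff, preimage_iUnion₂, hdev le_rfl]
  congr 1
  exact iUnion₂_congr fun r hr ↦ hdev (Finset.mem_filter.1 hr).2.le

theorem pairwiseDisjoint_firstDeviationSet (F : Finset ℝ) :
    (F : Set ℝ).PairwiseDisjoint fun s ↦ (firstDeviationSet ρ t F s : Set (ι → ℝ)) := by
  have hdisj {r s : ℝ} (hr : r ∈ F) (hsr : s < r) :
      Disjoint (firstDeviationSet ρ t F s : Set (ι → ℝ)) (firstDeviationSet ρ t F r) :=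
    disjoint_left.2 fun ω hs hr' ↦ hs.2 (mem_biUnion (by simp [hr, hsr]) hr'.1)
  intro s hs r hr hne
  rcases hne.lt_or_gt with hsr | hrs
  · exact hdisj hr hsr
  · exact (hdisj hs hrs).symm

theorem biUnion_deviationSet_eq_biUnion_firstDeviationSet (F : Finset ℝ) :
    ⋃ s ∈ F, (deviationSet ρ t s : Set (ι → ℝ)) = ⋃ s ∈ F, firstDeviationSet ρ t F s := by
  classical
  refine Subset.antisymm (fun ω hω ↦ ?_) (iUnion₂_mono fun s _ ↦ sdiff_subset)
  obtain ⟨s, hs, hωs⟩ := mem_iUnion₂.1 hω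
  obtain ⟨r, hr, hmax⟩ := (F.filter (ω ∈ deviationSet ρ t ·)).exists_max_image id
    ⟨s, Finset.mem_filter.2 ⟨hs, hωs⟩⟩
  obtain ⟨hrF, hωr⟩ := Finset.mem_filter.1 hr
  refine mem_biUnion hrF ⟨hωr, fun hω' ↦ ?_⟩
  obtain ⟨r', hr', hωr'⟩ := mem_iUnion₂.1 hω'
  obtain ⟨hr'F, hrr'⟩ := Finset.mem_filter.1 hr'
  exact (hmax r' (Finset.mem_filter.2 ⟨hr'F, hωr'⟩)).not_gt hrr'

theorem exp_le_prod_tailTilt_density (ht : 0 ≤ t) (hs : ρ.real (Ioi s) < 1)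
    (hω : ω ∈ deviationSet ρ t s) :
    ENNReal.ofReal (exp (2 * Fintype.card ι * t ^ 2)) ≤
      ∏ i, ENNReal.ofReal
        (if s < ω i then tiltFactor t else complFactor (tiltFactor t) (ρ.real (Ioi s))) := by
  have htu := lt_real_Ioi_of_mem_deviationSet hω
  have hα := tiltFactor_pos (htu.trans hs)
  have hβ := zero_le_one.trans
    (one_le_complFactor (tiltFactor_le_one ht (htu.trans hs)) measureReal_nonneg hs)
  rw [← ENNReal.ofReal_prod_of_nonneg fun i _ ↦ by split_ifs; exacts [hα.le, hβ],
    prod_ite_lt_eq_pow_mul_pow]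
  exact ENNReal.ofReal_le_ofReal <|
    exp_le_tiltFactor_pow_mul_complFactor_pow tailCount_le_card ⟨ht, htu.le⟩ hs hω.le

variable [IsProbabilityMeasure ρ]

theorem isProbabilityMeasure_tailTilt_tiltFactor (ht : t ∈ Ico 0 1) (hs : ρ.real (Ioi s) < 1) :
    IsProbabilityMeasure (tailTilt ρ (tiltFactor t) s) :=
  isProbabilityMeasure_tailTilt (tiltFactor_pos ht.2).le (tiltFactor_le_one ht.1 ht.2) hs

theorem exp_mul_pi_le_pi_tailTilt (ht : t ∈ Ico 0 1) (hs : ρ.real (Ioi s) < 1)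
    {A : Set (ι → ℝ)} (hA : MeasurableSet A) (hAs : A ⊆ deviationSet ρ t s) :
    ENNReal.ofReal (exp (2 * Fintype.card ι * t ^ 2)) * Measure.pi (fun _ ↦ ρ) A ≤
      Measure.pi (fun _ ↦ tailTilt ρ (tiltFactor t) s) A := by
  have hprob := isProbabilityMeasure_tailTilt_tiltFactor ht hs
  unfold tailTilt at hprob ⊢
  rw [pi_withDensity _ fun _ ↦ measurable_tailTilt_density _, withDensity_apply _ hA,
    ← setLIntegral_const]
  exact setLIntegral_mono' hA fun ω hω ↦ exp_le_prod_tailTilt_density ht.1 hs (hAs hω)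

theorem pi_tailTilt_firstDeviationSet (ht : t ∈ Ico 0 1) {s₀ : ℝ} (hs₀ : ρ.real (Ioi s₀) < 1)
    (hs : ρ.real (Ioi s) < 1) (hs₀s : s₀ ≤ s) (F : Finset ℝ) :
    Measure.pi (fun _ : ι ↦ tailTilt ρ (tiltFactor t) s) (firstDeviationSet ρ t F s) =
      Measure.pi (fun _ : ι ↦ tailTilt ρ (tiltFactor t) s₀) (firstDeviationSet ρ t F s) := by
  have := isProbabilityMeasure_tailTilt_tiltFactor ht hs₀
  have := isProbabilityMeasure_tailTilt_tiltFactor ht hs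
  have htrunc : Measurable (max · s) := measurable_id.max measurable_const
  refine pi_apply_eq_of_map_eq (f := fun _ ↦ (max · s)) (fun _ ↦ htrunc) (fun _ ↦ ?_)
    (measurableSet_firstDeviationSet F) (preimage_max_firstDeviationSet F)
  refine map_eq_of_restrict_eq_of_eqOn_compl measurableSet_Ioi ?_ htrunc
    fun x hx ↦ max_eq_right (notMem_Ioi.1 hx)
  rw [restrict_tailTilt_Ioi le_rfl, restrict_tailTilt_Ioi hs₀s]

theorem exp_mul_pi_biUnion_deviationSet_le_one (ht : 0 ≤ t) (F : Finset ℝ)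
    (hF : ∀ s ∈ F, ρ.real (Ioi s) < 1) :
    ENNReal.ofReal (exp (2 * Fintype.card ι * t ^ 2)) *
      Measure.pi (fun _ : ι ↦ ρ) (⋃ s ∈ F, deviationSet ρ t s) ≤ 1 := by
  rcases (⋃ s ∈ F, (deviationSet ρ t s : Set (ι → ℝ))).eq_empty_or_nonempty with hempty | ⟨ω, hω⟩
  · simp [hempty]
  obtain ⟨r, hr, hωr⟩ := mem_iUnion₂.1 hω
  have ht1 : t ∈ Ico 0 1 := ⟨ht, (lt_real_Ioi_of_mem_deviationSet hωr).trans (hF r hr)⟩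
  obtain ⟨s₀, hs₀F, hs₀⟩ := F.exists_min_image id ⟨r, hr⟩
  have := isProbabilityMeasure_tailTilt_tiltFactor ht1 (hF s₀ hs₀F)
  have hunion (μ : Measure ℝ) [IsProbabilityMeasure μ] :
      Measure.pi (fun _ : ι ↦ μ) (⋃ s ∈ F, deviationSet ρ t s) =
        ∑ s ∈ F, Measure.pi (fun _ : ι ↦ μ) (firstDeviationSet ρ t F s) := by
    rw [biUnion_deviationSet_eq_biUnion_firstDeviationSet, measure_biUnion_finset
      (pairwiseDisjoint_firstDeviationSet F) fun s _ ↦ measurableSet_firstDeviationSet F]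
  calc
    _ = ∑ s ∈ F, ENNReal.ofReal (exp (2 * Fintype.card ι * t ^ 2)) *
          Measure.pi (fun _ : ι ↦ ρ) (firstDeviationSet ρ t F s) := by
        rw [hunion, Finset.mul_sum]
    _ ≤ ∑ s ∈ F, Measure.pi (fun _ : ι ↦ tailTilt ρ (tiltFactor t) s₀)
          (firstDeviationSet ρ t F s) :=
        Finset.sum_le_sum fun s hs ↦ (exp_mul_pi_le_pi_tailTilt ht1 (hF s hs)
          (measurableSet_firstDeviationSet F) sdiff_subset).trans_eq
            (pi_tailTilt_firstDeviationSet ht1 (hF s₀ hs₀F) (hF s hs) (hs₀ s hs) F)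
    _ = Measure.pi (fun _ : ι ↦ tailTilt ρ (tiltFactor t) s₀) (⋃ s ∈ F, deviationSet ρ t s) :=
        (hunion _).symm
    _ ≤ 1 := prob_le_one

theorem pi_deviationSet_eq_zero_of_real_Ioi_eq_one (ht : 0 ≤ t) (hs : ρ.real (Ioi s) = 1) :
    Measure.pi (fun _ : ι ↦ ρ) (deviationSet ρ t s) = 0 := by
  have hIic : ρ (Iic s) = 0 := by
    rw [← compl_Ioi, ← measureReal_eq_zero_iff, probReal_compl_eq_one_sub measurableSet_Ioi, hs,
      sub_self]
  refine measure_mono_null (t := ⋃ i, Function.eval i ⁻¹' Iic s) (fun ω hω ↦ ?_)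
    (measure_iUnion_null fun i ↦ Measure.pi_eval_preimage_null _ hIic)
  by_contra hall
  have hcount : tailCount s ω = Fintype.card ι := by
    rw [tailCount, Finset.filter_true_of_mem, Finset.card_univ]
    simpa using hall
  have hlt : (Fintype.card ι : ℝ) < Fintype.card ι * (1 - t) := by
    simpa only [deviationSet, mem_ofPred_eq, hcount, hs] using hω
  nlinarith [(Fintype.card ι).cast_nonneg (α := ℝ)]

theorem exists_rat_mem_deviationSet (hω : ω ∈ deviationSet ρ t s) :
    ∃ q : ℚ, ω ∈ deviationSet ρ t q := by
  have htail (r : ℝ) : ρ.real (Ioi r) = 1 - cdf ρ r := by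
    rw [cdf_eq_real, ← compl_Iic, probReal_compl_eq_one_sub measurableSet_Iic]
  have hcont : ContinuousWithinAt (fun r ↦ Fintype.card ι * (ρ.real (Ioi r) - t)) (Ioi s) s := by
    simp only [htail]
    have := ((cdf ρ).right_continuous s).mono Ioi_subset_Ici_self
    fun_prop
  obtain ⟨r, hsr, hIoo⟩ := mem_nhdsGT_iff_exists_Ioo_subset.1 (hcont.eventually_const_lt hω)
  obtain ⟨q, hsq, hqr⟩ := exists_rat_btwn (mem_Ioi.1 hsr)
  have hcount : (tailCount q ω : ℝ) ≤ tailCount s ω := Nat.cast_le.2 (tailCount_antitone hsq.le)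
  exact ⟨q, hcount.trans_lt (hIoo ⟨hsq, hqr⟩)⟩

theorem pi_iUnion_deviationSet_le (ht : 0 ≤ t) :
    Measure.pi (fun _ : ι ↦ ρ) (⋃ s, deviationSet ρ t s) ≤
      ENNReal.ofReal (exp (-(2 * Fintype.card ι * t ^ 2))) := by
  set Q : Set ℝ := range ((↑) : ℚ → ℝ)
  have hQ : Q.Countable := countable_range _
  have hsub : ⋃ s, (deviationSet ρ t s : Set (ι → ℝ)) ⊆
      (⋃ s ∈ {s ∈ Q | ρ.real (Ioi s) < 1}, deviationSet ρ t s) ∪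
        ⋃ s ∈ {s ∈ Q | ρ.real (Ioi s) = 1}, deviationSet ρ t s := by
    refine iUnion_subset fun s ω hω ↦ ?_
    obtain ⟨q, hq⟩ := exists_rat_mem_deviationSet hω
    rcases (measureReal_le_one (μ := ρ) (s := Ioi (q : ℝ))).lt_or_eq with h | h
    · exact .inl (mem_biUnion ⟨mem_range_self q, h⟩ hq)
    · exact .inr (mem_biUnion ⟨mem_range_self q, h⟩ hq)
  have hnull : Measure.pi (fun _ : ι ↦ ρ)
      (⋃ s ∈ {s ∈ Q | ρ.real (Ioi s) = 1}, deviationSet ρ t s) = 0 :=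
    (measure_biUnion_null_iff (hQ.mono (sep_subset _ _))).2 fun s hs ↦
      pi_deviationSet_eq_zero_of_real_Ioi_eq_one ht hs.2
  refine (measure_mono hsub).trans ((measure_union_le _ _).trans ?_)
  rw [hnull, add_zero]
  refine measure_biUnion_le_of_finset_le (hQ.mono (sep_subset _ _)) fun F hF ↦ ?_
  rw [exp_neg, ENNReal.ofReal_inv_of_pos (exp_pos _), ENNReal.le_inv_iff_mul_le, mul_comm]
  exact exp_mul_pi_biUnion_deviationSet_le_one ht F fun s hs ↦ (hF hs).2

end DvoretzkyKieferWolfowitz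

section ConfidenceBand

variable {E : Type*} [MeasurableSpace E] {P : Measure E} [IsProbabilityMeasure P]
  {ι : Type*} [Fintype ι] {X : E → ℝ}

theorem pi_exists_real_lt_le [Nonempty ι] (hX : Measurable X) {t : ℝ} (ht : 0 ≤ t) :
    Measure.pi (fun _ : ι ↦ P) {ω | ∃ x, P.real {p | X p ≤ x} <
        1 - 1 / Fintype.card ι * (∑ i, if x < X (ω i) then 1 else 0) - t} ≤
      ENNReal.ofReal (exp (-(2 * Fintype.card ι * t ^ 2))) := by
  have := Measure.isProbabilityMeasure_map (μ := P) hX.aemeasurable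
  have htail (x : ℝ) : (P.map X).real (Ioi x) = 1 - P.real {p | X p ≤ x} := by
    rw [← compl_Iic, probReal_compl_eq_one_sub measurableSet_Iic,
      map_measureReal_apply hX measurableSet_Iic]
    rfl
  have hcard : (0 : ℝ) < Fintype.card ι := Nat.cast_pos.2 Fintype.card_pos
  have hXpi : Measurable fun (ω : ι → E) i ↦ X (ω i) := by fun_prop
  calc
    _ ≤ Measure.pi (fun _ : ι ↦ P)
          ((fun ω i ↦ X (ω i)) ⁻¹' ⋃ x, deviationSet (P.map X) t x) := by
        refine measure_mono fun ω ⟨x, hx⟩ ↦ mem_iUnion.2 ⟨x, ?_⟩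
        simp only [deviationSet, mem_ofPred_eq, tailCount_eq_sum, htail]
        rw [one_div, sub_right_comm, lt_sub_comm, sub_right_comm] at hx
        exact (inv_mul_lt_iff₀ hcard).1 hx
    _ ≤ (Measure.pi fun _ : ι ↦ P).map (fun ω i ↦ X (ω i)) (⋃ x, deviationSet (P.map X) t x) :=
        Measure.le_map_apply hXpi.aemeasurable _
    _ ≤ _ := by
        rw [Measure.pi_map_pi fun _ ↦ hX.aemeasurable]
        exact pi_iUnion_deviationSet_le ht

theorem one_sub_le_pi_forall_le_real [Nonempty ι] (hX : Measurable X) {δ : ℝ}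
    (hδ : δ ∈ Ioc 0 1) :
    1 - ENNReal.ofReal δ ≤ Measure.pi (fun _ : ι ↦ P) {ω | ∀ x,
      1 - 1 / Fintype.card ι * (∑ i, if x < X (ω i) then 1 else 0)
        - √(log (1 / δ) / (2 * Fintype.card ι)) ≤ P.real {p | X p ≤ x}} := by
  have : (0 : ℝ) < Fintype.card ι := Nat.cast_pos.2 Fintype.card_pos
  have hlog : 0 ≤ log (1 / δ) := log_nonneg (one_le_one_div hδ.1 hδ.2)
  have hexp : exp (-(2 * Fintype.card ι * √(log (1 / δ) / (2 * Fintype.card ι)) ^ 2)) = δ := by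
    rw [sq_sqrt (by positivity), mul_div_cancel₀ _ (by positivity), one_div, log_inv, neg_neg,
      exp_log hδ.1]
  have hdkw := pi_exists_real_lt_le (P := P) (ι := ι) hX
    (sqrt_nonneg (log (1 / δ) / (2 * Fintype.card ι)))
  rw [hexp] at hdkw
  rw [tsub_le_iff_right, ← measure_univ (μ := Measure.pi fun _ : ι ↦ P)]
  refine (measure_univ_le_add_compl _).trans (add_le_add_right (le_trans ?_ hdkw) _)
  exact measure_mono fun ω hω ↦ by
    simpa only [mem_compl_iff, mem_ofPred_eq, not_forall, not_le] using hω

end ConfidenceBand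

section Risk

variable {Z H : Type*} [MeasurableSpace Z] [MeasurableSpace H] {ℓ : H → Z → ℝ}

theorem measurable_trueRisk (D : Measure Z) [SFinite D] (hℓ : Measurable (Function.uncurry ℓ)) :
    Measurable (trueRisk D ℓ) :=
  hℓ.stronglyMeasurable.integral_prod_right'.measurable

theorem measurable_empRisk {m : ℕ} (hℓ : Measurable (Function.uncurry ℓ)) :
    Measurable fun p : (Fin m → Z) × H ↦ empRisk ℓ p.2 p.1 :=
  .div_const (Finset.measurable_sum _ fun i _ ↦
    hℓ.comp (measurable_snd.prodMk ((measurable_pi_apply i).comp measurable_fst))) _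

end Risk

theorem lee_refined_dkw_bound_general
    {Z H : Type*} [MeasurableSpace Z] [MeasurableSpace H]
    (m : ℕ) (_hm : 0 < m) (n : ℕ) (hn : 0 < n)
    (D : Measure Z) [IsProbabilityMeasure D]
    (ℓ : H → Z → ℝ) (hℓ : Measurable (Function.uncurry ℓ)) (_hℓD : ∀ h, Integrable (ℓ h) D)
    (μ : H → (Fin m → Z) → ℝ) (hμ : Measurable (Function.uncurry μ))
    (κ : Kernel (Fin m → Z) H) [IsMarkovKernel κ] (δ : ℝ) (hδ : δ ∈ Ioc 0 1) :
    1 - ENNReal.ofReal δ ≤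
      (Measure.pi fun _ : Fin n ↦ Measure.pi (fun _ : Fin m ↦ D) ⊗ₘ κ) {ω | ∀ ε : ℝ,
        1 - 1 / n * (∑ i, if ε < |trueRisk D ℓ (ω i).2 - empRisk ℓ (ω i).2 (ω i).1|
            - μ (ω i).2 (ω i).1 then 1 else 0) - √(log (1 / δ) / (2 * n)) ≤
          (Measure.pi (fun _ : Fin m ↦ D) ⊗ₘ κ).real
            {p | |trueRisk D ℓ p.2 - empRisk ℓ p.2 p.1| ≤ μ p.2 p.1 + ε}} := by
  have : Nonempty (Fin n) := ⟨⟨0, hn⟩⟩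
  have hX : Measurable fun p : (Fin m → Z) × H ↦
      |trueRisk D ℓ p.2 - empRisk ℓ p.2 p.1| - μ p.2 p.1 :=
    (((measurable_trueRisk D hℓ).comp measurable_snd).sub (measurable_empRisk hℓ)).abs.sub
      (hμ.comp measurable_swap)
  simpa only [Fintype.card_fin, sub_le_iff_le_add'] using one_sub_le_pi_forall_le_real
    (P := Measure.pi (fun _ : Fin m ↦ D) ⊗ₘ κ) (ι := Fin n) hX hδ

/-- **Refined Lee-et-al. bound via Dvoretzky–Kiefer–Wolfowitz.**
Drawing `n` pairs `(Sᵢ,hᵢ)` i.i.d. from `D^m ⊗ Q`, with probability at least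
`1−δ` over these pairs, for every `ε > 0`,
`P_{S∼D^m, h∼Q_S}[ |R_D^ℓ(h) − R_S^ℓ(h)| ≤ μ(h,S) + ε ]
  ≥ 1 − (1/n)·Σᵢ 1[|R_D^ℓ(hᵢ) − R_{Sᵢ}^ℓ(hᵢ)| − μ(hᵢ,Sᵢ) > ε]
      − √(ln(2/δ)/(2n))`. -/
theorem lee_refined_dkw_bound
    {Z H : Type*} [MeasurableSpace Z] [MeasurableSpace H]
    (m : ℕ) (hm : 0 < m) (n : ℕ) (hn : 0 < n)
    (D : Measure Z) [IsProbabilityMeasure D]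
    (ℓ : H → Z → ℝ) (hℓ : Measurable (Function.uncurry ℓ))
    (hℓ01 : ∀ h z, ℓ h z ∈ Set.Icc (0:ℝ) 1)
    (μ : H → (Fin m → Z) → ℝ) (hμ : Measurable (Function.uncurry μ))
    (κ : Kernel (Fin m → Z) H) [IsMarkovKernel κ]
    (δ : ℝ) (hδ : δ ∈ Set.Ioc (0:ℝ) 1) :
    1 - ENNReal.ofReal δ ≤
      (Measure.pi (fun _ : Fin n =>
          Measure.pi (fun _ : Fin m => D) ⊗ₘ κ))
        {ω : Fin n → ((Fin m → Z) × H) | ∀ ε : ℝ, 0 < ε →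
          1 - (1 / n) * (∑ i : Fin n,
                if ε < |trueRisk D ℓ (ω i).2 - empRisk ℓ (ω i).2 (ω i).1|
                      - μ (ω i).2 (ω i).1 then (1:ℝ) else 0)
            - Real.sqrt (Real.log (2/δ) / (2*n)) ≤
          ((Measure.pi (fun _ : Fin m => D) ⊗ₘ κ)
            {p : (Fin m → Z) × H |
              |trueRisk D ℓ p.2 - empRisk ℓ p.2 p.1| ≤ μ p.2 p.1 + ε}).toReal } := by
  have hℓD (h : H) : Integrable (ℓ h) D :=
    .of_mem_Icc 0 1 (hℓ.comp measurable_prodMk_left).aemeasurable (.of_forall (hℓ01 h))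
  refine (lee_refined_dkw_bound_general m hm n hn D ℓ hℓ hℓD μ hμ κ δ hδ).trans
    (measure_mono fun ω hω ε _ ↦ le_trans ?_ (hω ε))
  have hδ0 : 0 < δ := hδ.1
  gcongr
  norm_num
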